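/- Let ε>0, M≥1 an integer, ε<Δx, and 0<δx≤ε/(2M+1). For m∈{-M,…,M} let L_m∈ℤ, α_m∈[0,1/Δx) satisfy m/ε=L_m/Δx+α_m, set w_m=e^{2πi L_m δx/Δx}, and let V be the (2M+1)×(2M+1) Vandermonde matrix V_{m,k}=w_m^k (m=-M,…,M; k=0,…,2M). Then V is invertible and its inverse satisfies ‖V^{-1}‖_∞ ≤ (sin(π(1/ε−1/Δx)δx))^{-2M}, where ‖A‖_∞ denotes the maximum absolute row sum of A. -/

import Mathlib

open MeasureTheory Complex Filter
open scoped ENNReal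

/-- The Vandermonde matrix with nodes `w`, entries `V_{l,k} = w_l^k`. -/
noncomputable def vanderMat {n : ℕ} (w : Fin n → ℂ) : Matrix (Fin n) (Fin n) ℂ :=
  Matrix.of fun l k => w l ^ (k : ℕ)

/-- Basic coefficient bound for products of linear factors with unimodular roots. -/
lemma coeff_prod_bound {ι : Type*} [DecidableEq ι] (w : ι → ℂ) (hw : ∀ j, ‖w j‖ = 1) (S : Finset ι) :
    ∀ k : ℕ, ‖(∏ j ∈ S, (Polynomial.X - Polynomial.C (w j))).coeff k‖ ≤ (S.card.choose k : ℝ) := by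
  induction S using Finset.induction_on with
  | empty =>
    intro k
    rcases k with _ | k
    · simp
    · simp [Polynomial.coeff_one]
  | insert a S ha ih =>
    intro k
    rw [Finset.prod_insert ha, Finset.card_insert_of_notMem ha, sub_mul, Polynomial.coeff_sub,
      Polynomial.coeff_C_mul]
    rcases k with _ | k
    · have := ih 0
      simpa [hw] using this
    · rw [Polynomial.coeff_X_mul, Nat.choose_succ_succ]
      refine (norm_sub_le _ _).trans ?_
      rw [norm_mul, hw, one_mul]
      push_cast
      exact add_le_add (ih k) (ih (k + 1))

lemma vander_mul {n : ℕ} (w : Fin n → ℂ) (hw : Function.Injective w) :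
    vanderMat w * (Matrix.of fun k m : Fin n =>
      (Lagrange.basis Finset.univ w m).coeff (k : ℕ)) = 1 := by
  ext l m
  rw [Matrix.mul_apply]
  have hd : (Lagrange.basis Finset.univ w m).natDegree < n := by
    have h1 := Lagrange.degree_basis (s := Finset.univ) (v := w) (i := m) hw.injOn (Finset.mem_univ m)
    have h0 : 0 < n := m.pos
    rw [Polynomial.natDegree_lt_iff_degree_lt (Lagrange.basis_ne_zero hw.injOn (Finset.mem_univ m)), h1]
    simp only [Finset.card_univ, Fintype.card_fin]
    exact_mod_cast Nat.sub_lt h0 one_pos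
  have h := Polynomial.eval_eq_sum_range' hd (w l)
  rw [← Fin.sum_univ_eq_sum_range
    (fun i => (Lagrange.basis Finset.univ w m).coeff i * w l ^ i)] at h
  simp only [vanderMat, Matrix.of_apply]
  rw [Finset.sum_congr rfl (fun k _ => mul_comm _ _), ← h, Matrix.one_apply]
  split_ifs with hlm
  · subst hlm
    exact Lagrange.eval_basis_self hw.injOn (Finset.mem_univ _)
  · exact Lagrange.eval_basis_of_ne (Ne.symm hlm) (Finset.mem_univ _)

lemma vander_isUnit {n : ℕ} (w : Fin n → ℂ) (hw : Function.Injective w) :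
    IsUnit (vanderMat w) := by
  rw [Matrix.isUnit_iff_isUnit_det]
  exact Matrix.isUnit_det_of_right_inverse (vander_mul w hw)

lemma vander_inv {n : ℕ} (w : Fin n → ℂ) (hw : Function.Injective w) (k m : Fin n) :
    ‖(vanderMat w)⁻¹ k m‖ =
      ‖(∏ j ∈ Finset.univ.erase m, (Polynomial.X - Polynomial.C (w j))).coeff (k : ℕ)‖ /
        ∏ j ∈ Finset.univ.erase m, ‖w m - w j‖ := by
  rw [Matrix.inv_eq_right_inv (vander_mul w hw), Matrix.of_apply, Lagrange.basis]
  simp only [Lagrange.basisDivisor]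
  rw [Finset.prod_mul_distrib, ← map_prod, Polynomial.coeff_C_mul, norm_mul, norm_prod]
  simp only [norm_inv]
  rw [Finset.prod_inv_distrib, div_eq_inv_mul]

/-- Unimodular node. -/
noncomputable def nd (t : ℝ) : ℂ := Complex.exp (2 * Real.pi * Complex.I * t)

lemma nd_eq (t : ℝ) : nd t = Complex.exp (((2 * Real.pi * t : ℝ) : ℂ) * Complex.I) := by
  unfold nd; congr 1; push_cast; ring

lemma nd_norm (t : ℝ) : ‖nd t‖ = 1 := by
  rw [nd_eq]; exact Complex.norm_exp_ofReal_mul_I _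

lemma nd_add (s t : ℝ) : ‖nd s + nd t‖ = 2 * |Real.cos (Real.pi * (s - t))| := by
  have h : nd s + nd t = Complex.exp (((Real.pi * (s + t) : ℝ) : ℂ) * Complex.I) *
      (2 * Complex.cos ((Real.pi * (s - t) : ℝ) : ℂ)) := by
    rw [Complex.two_cos, mul_add, ← Complex.exp_add, ← Complex.exp_add, nd, nd]
    congr 2 <;> push_cast <;> ring
  rw [h, norm_mul, Complex.norm_exp_ofReal_mul_I, one_mul, norm_mul, ← Complex.ofReal_cos,
    Complex.norm_real, Real.norm_eq_abs]
  simp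

lemma nd_sub (s t : ℝ) : ‖nd s - nd t‖ = 2 * |Real.sin (Real.pi * (s - t))| := by
  have h : nd (t + 1/2) = - nd t := by
    have : nd (t + 1/2) = nd t * Complex.exp (Real.pi * Complex.I) := by
      rw [nd, nd, ← Complex.exp_add]; congr 1; push_cast; ring
    rw [this, Complex.exp_pi_mul_I]; ring
  rw [sub_eq_add_neg, ← h, nd_add]
  congr 2
  rw [← Real.cos_sub_pi_div_two]
  congr 1; ring

lemma sin_lower {y z : ℝ} (hy : 0 ≤ y) (hz : y ≤ z) (hz2 : z ≤ Real.pi - y) :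
    Real.sin y ≤ Real.sin z := by
  rcases le_total z (Real.pi / 2) with h | h
  · exact Real.sin_le_sin_of_le_of_le_pi_div_two (by linarith [Real.pi_pos]) h hz
  · rw [← Real.sin_pi_sub z]
    exact Real.sin_le_sin_of_le_of_le_pi_div_two (by linarith [Real.pi_pos]) (by linarith) (by linarith)

lemma nd_sub_lower {s t g : ℝ} (hg : 0 ≤ g) (h1 : g ≤ |s - t|) (h2 : |s - t| ≤ 1 - g) :
    2 * Real.sin (Real.pi * g) ≤ ‖nd s - nd t‖ := by
  rw [nd_sub]
  have h3 : |Real.sin (Real.pi * (s - t))| = |Real.sin (Real.pi * |s - t|)| := by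
    rcases abs_cases (s - t) with ⟨h, _⟩ | ⟨h, _⟩
    · rw [h]
    · rw [h, mul_neg, Real.sin_neg, abs_neg]
  rw [h3]
  have hp := Real.pi_pos
  have := sin_lower (y := Real.pi * g) (z := Real.pi * |s - t|) (by positivity) (by gcongr)
    (by nlinarith)
  linarith [le_abs_self (Real.sin (Real.pi * |s - t|))]

lemma tri_obtuse {A B C x : ℝ} (hABC : A + B + C = Real.pi) (hx : 0 < x) (hA : x ≤ A) (hB : x ≤ B)
    (hC : x ≤ C) (hc : Real.cos A ≤ 0) :
    (|Real.cos A| * Real.sin A + |Real.cos B| * Real.sin B + |Real.cos C| * Real.sin C)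
      * Real.sin x ^ 2 ≤ 2 * (Real.sin A * Real.sin B * Real.sin C) := by
  have hA2 : Real.pi / 2 ≤ A := by
    by_contra h
    push Not at h
    have := Real.cos_pos_of_mem_Ioo (x := A) ⟨by linarith [Real.pi_pos], h⟩
    linarith
  have hcB : 0 ≤ Real.cos B := Real.cos_nonneg_of_mem_Icc ⟨by linarith [Real.pi_pos], by linarith⟩
  have hcC : 0 ≤ Real.cos C := Real.cos_nonneg_of_mem_Icc ⟨by linarith [Real.pi_pos], by linarith⟩
  have hsx : 0 < Real.sin x := Real.sin_pos_of_pos_of_lt_pi hx (by linarith)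
  have hsA : 0 < Real.sin A := Real.sin_pos_of_pos_of_lt_pi (by linarith) (by linarith)
  have hsB : Real.sin x ≤ Real.sin B := sin_lower hx.le hB (by linarith)
  have hsC : Real.sin x ≤ Real.sin C := sin_lower hx.le hC (by linarith)
  rw [abs_of_nonpos hc, abs_of_nonneg hcB, abs_of_nonneg hcC]
  have hAe : A = Real.pi - (B + C) := by linarith
  have e1 : Real.cos A = Real.sin B * Real.sin C - Real.cos B * Real.cos C := by
    rw [hAe, Real.cos_pi_sub, Real.cos_add]; ring
  have e2 : Real.sin A = Real.sin B * Real.cos C + Real.cos B * Real.sin C := by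
    rw [hAe, Real.sin_pi_sub, Real.sin_add]
  have e3 : -Real.cos A * Real.sin A + Real.cos B * Real.sin B + Real.cos C * Real.sin C
      = 2 * Real.sin A * (Real.cos B * Real.cos C) := by
    rw [e1, e2]
    linear_combination (-(Real.cos B * Real.sin B)) * Real.sin_sq_add_cos_sq C
      - (Real.cos C * Real.sin C) * Real.sin_sq_add_cos_sq B
  rw [e3]
  have h1 : Real.cos B * Real.cos C ≤ 1 := by
    nlinarith [Real.cos_le_one B, Real.cos_le_one C]
  have h2 : Real.sin x ^ 2 ≤ Real.sin B * Real.sin C := by nlinarith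
  have h3 : Real.cos B * Real.cos C * Real.sin x ^ 2 ≤ Real.sin B * Real.sin C := by
    nlinarith [sq_nonneg (Real.sin x)]
  nlinarith

lemma tri {A B C x : ℝ} (hABC : A + B + C = Real.pi) (hx : 0 < x) (hA : x ≤ A) (hB : x ≤ B)
    (hC : x ≤ C) :
    (|Real.cos A| * Real.sin A + |Real.cos B| * Real.sin B + |Real.cos C| * Real.sin C)
      * Real.sin x ^ 2 ≤ 2 * (Real.sin A * Real.sin B * Real.sin C) := by
  rcases le_total (Real.cos A) 0 with h | h
  · exact tri_obtuse hABC hx hA hB hC h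
  rcases le_total (Real.cos B) 0 with h' | h'
  · have := tri_obtuse (A := B) (B := A) (C := C) (by linarith) hx hB hA hC h'
    linarith
  rcases le_total (Real.cos C) 0 with h'' | h''
  · have := tri_obtuse (A := C) (B := A) (C := B) (by linarith) hx hC hA hB h''
    linarith
  have hsA : 0 < Real.sin A := Real.sin_pos_of_pos_of_lt_pi (by linarith) (by linarith)
  have hsB : 0 < Real.sin B := Real.sin_pos_of_pos_of_lt_pi (by linarith) (by linarith)
  have hsC : 0 < Real.sin C := Real.sin_pos_of_pos_of_lt_pi (by linarith) (by linarith)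
  rw [abs_of_nonneg h, abs_of_nonneg h', abs_of_nonneg h'']
  have hAe : A = Real.pi - (B + C) := by linarith
  have e1 : Real.cos A = Real.sin B * Real.sin C - Real.cos B * Real.cos C := by
    rw [hAe, Real.cos_pi_sub, Real.cos_add]; ring
  have e2 : Real.sin A = Real.sin B * Real.cos C + Real.cos B * Real.sin C := by
    rw [hAe, Real.sin_pi_sub, Real.sin_add]
  have e3 : Real.cos A * Real.sin A + Real.cos B * Real.sin B + Real.cos C * Real.sin C
      = 2 * (Real.sin A * Real.sin B * Real.sin C) := by
    rw [e1, e2]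
    linear_combination (-(Real.cos B * Real.sin B)) * Real.sin_sq_add_cos_sq C
      - (Real.cos C * Real.sin C) * Real.sin_sq_add_cos_sq B
  rw [e3]
  have := Real.sin_sq_le_one x
  have hp : 0 < Real.sin A * Real.sin B * Real.sin C := by positivity
  nlinarith

lemma binom_bound (M : ℕ) (hM : 2 ≤ M) :
    (2 * M + 1) * M.centralBinom ≤ 4 ^ M * 2 ^ (M - 1) := by
  induction M, hM using Nat.le_induction with
  | base => decide
  | succ n hn ih =>
    have h := Nat.succ_mul_centralBinom_succ n
    obtain ⟨p, rfl⟩ : ∃ p, n = p + 1 := ⟨n - 1, by omega⟩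
    simp only [Nat.add_sub_cancel] at ih ⊢
    rw [pow_succ, pow_succ 2 p]
    have : (p + 1 + 1) * ((2 * (p + 1 + 1) + 1) * (p + 1 + 1).centralBinom) ≤
        (p + 1 + 1) * (4 ^ (p + 1) * 4 * (2 ^ p * 2)) := by
      calc _ = (2 * (p + 1 + 1) + 1) * ((p + 1 + 1) * (p + 1 + 1).centralBinom) := by ring
        _ = (2 * (2 * p + 5)) * ((2 * (p + 1) + 1) * (p + 1).centralBinom) := by rw [h]; ring
        _ ≤ (8 * (p + 2)) * (4 ^ (p + 1) * 2 ^ p) := Nat.mul_le_mul (by omega) ih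
        _ = _ := by ring
    exact Nat.le_of_mul_le_mul_left this (by omega)

/-- General case `M ≥ 2`. -/
lemma big_case (M : ℕ) (hM : 2 ≤ M) (w : Fin (2 * M + 1) → ℂ) (hinj : Function.Injective w)
    (hw : ∀ j, ‖w j‖ = 1) (s : ℝ) (hs : 0 < s)
    (h1 : ∀ i j, i ≠ j → 2 * s ≤ ‖w i - w j‖)
    (h2 : ∀ i j, i ≠ j → j ≠ i + 1 → j ≠ i - 1 → 2 * s * √2 ≤ ‖w i - w j‖)
    (k : Fin (2 * M + 1)) :
    ∑ m, ‖(vanderMat w)⁻¹ k m‖ ≤ (s ^ (2 * M))⁻¹ := by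
  have key : ∀ m, ‖(vanderMat w)⁻¹ k m‖ ≤
      (M.centralBinom : ℝ) / (4 ^ M * 2 ^ (M - 1) * s ^ (2 * M)) := by
    intro m
    rw [vander_inv w hinj]
    have hcard : (Finset.univ.erase m).card = 2 * M := by
      rw [Finset.card_erase_of_mem (Finset.mem_univ _)]; simp
    apply div_le_div₀ (by positivity) _ (by positivity)
    · set T : Finset (Fin (2 * M + 1)) := {m + 1, m - 1} with hT
      have hTc : T.card ≤ 2 := Finset.card_le_two
      have hS : 2 * M - 2 ≤ ((Finset.univ.erase m) \ T).card := by
        have := Finset.le_card_sdiff T (Finset.univ.erase m)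
        omega
      have e : ∏ j ∈ Finset.univ.erase m, (2 * s * (if j ∈ T then 1 else √2)) ≤
          ∏ j ∈ Finset.univ.erase m, ‖w m - w j‖ := by
        apply Finset.prod_le_prod
        · intro j _
          split_ifs <;> positivity
        · intro j hj
          have hj' := (Finset.mem_erase.1 hj).1
          split_ifs with hjT
          · rw [mul_one]; exact h1 m j hj'.symm
          · simp only [hT, Finset.mem_insert, Finset.mem_singleton, not_or] at hjT
            exact h2 m j hj'.symm hjT.1 hjT.2
      refine le_trans ?_ e
      rw [Finset.prod_mul_distrib, Finset.prod_const, hcard, Finset.prod_ite, Finset.prod_const_one,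
        one_mul, Finset.prod_const, Finset.filter_notMem_eq_sdiff]
      have e2 : (2 : ℝ) ^ (M - 1) ≤ √2 ^ ((Finset.univ.erase m) \ T).card := by
        calc (2 : ℝ) ^ (M - 1) = √2 ^ (2 * (M - 1)) := by
              rw [pow_mul, Real.sq_sqrt (by norm_num)]
          _ ≤ _ := pow_le_pow_right₀ (by rw [Real.one_le_sqrt]; norm_num) (by omega)
      calc (4 : ℝ) ^ M * 2 ^ (M - 1) * s ^ (2 * M) = (2 * s) ^ (2 * M) * 2 ^ (M - 1) := by
            rw [mul_pow, pow_mul 2]; norm_num; ring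
        _ ≤ _ := by gcongr
    · refine (coeff_prod_bound w hw _ _).trans ?_
      rw [hcard]
      exact_mod_cast Nat.choose_le_centralBinom _ _
  calc ∑ m, ‖(vanderMat w)⁻¹ k m‖ ≤ ∑ m : Fin (2 * M + 1),
      (M.centralBinom : ℝ) / (4 ^ M * 2 ^ (M - 1) * s ^ (2 * M)) := Finset.sum_le_sum (fun m _ => key m)
    _ = ((2 * M + 1) * M.centralBinom : ℝ) / (4 ^ M * 2 ^ (M - 1)) * (s ^ (2 * M))⁻¹ := by
      rw [Finset.sum_const, Finset.card_univ, Fintype.card_fin, nsmul_eq_mul]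
      push_cast
      field_simp
    _ ≤ 1 * (s ^ (2 * M))⁻¹ := by
      gcongr
      rw [div_le_one (by positivity)]
      exact_mod_cast binom_bound M hM
    _ = _ := one_mul _

lemma quad_coeff (a b : ℂ) : (Polynomial.X - Polynomial.C a) * (Polynomial.X - Polynomial.C b) =
    Polynomial.C 1 * Polynomial.X ^ 2 + Polynomial.C (-(a + b)) * Polynomial.X
      + Polynomial.C (a * b) := by
  simp only [map_one, map_neg, map_add, map_mul]; ring

/-- Case `M = 1`. -/
lemma small_case (t : Fin 3 → ℝ) (hinj : Function.Injective fun i => nd (t i)) (g : ℝ) (hg : 0 < g)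
    (h01 : g ≤ t 1 - t 0) (h12 : g ≤ t 2 - t 1) (h02 : t 2 - t 0 ≤ 1 - g) (k : Fin 3) :
    ∑ m, ‖(vanderMat fun i => nd (t i))⁻¹ k m‖ ≤ (Real.sin (Real.pi * g) ^ 2)⁻¹ := by
  have hp := Real.pi_pos
  set A := Real.pi * (t 1 - t 0) with hA
  set B := Real.pi * (t 2 - t 1) with hB
  set C := Real.pi - A - B with hC
  set x := Real.pi * g with hx
  have hx0 : 0 < x := by positivity
  have hxA : x ≤ A := by rw [hx, hA]; gcongr
  have hxB : x ≤ B := by rw [hx, hB]; gcongr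
  have hxC : x ≤ C := by rw [hx, hC, hA, hB]; nlinarith
  have hsx : 0 < Real.sin x := Real.sin_pos_of_pos_of_lt_pi hx0 (by linarith)
  have hsA : Real.sin x ≤ Real.sin A := sin_lower hx0.le hxA (by linarith)
  have hsB : Real.sin x ≤ Real.sin B := sin_lower hx0.le hxB (by linarith)
  have hsC : Real.sin x ≤ Real.sin C := sin_lower hx0.le hxC (by linarith)
  have hsA0 := hsx.trans_le hsA
  have hsB0 := hsx.trans_le hsB
  have hsC0 := hsx.trans_le hsC
  have n10 : ‖nd (t 1) - nd (t 0)‖ = 2 * Real.sin A := by rw [nd_sub, abs_of_pos hsA0]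
  have n21 : ‖nd (t 2) - nd (t 1)‖ = 2 * Real.sin B := by rw [nd_sub, abs_of_pos hsB0]
  have hABe : Real.pi * (t 2 - t 0) = Real.pi - C := by rw [hC, hA, hB]; ring
  have n20 : ‖nd (t 2) - nd (t 0)‖ = 2 * Real.sin C := by
    rw [nd_sub, hABe, Real.sin_pi_sub, abs_of_pos hsC0]
  have p10 : ‖nd (t 1) + nd (t 0)‖ = 2 * |Real.cos A| := by rw [nd_add]
  have p21 : ‖nd (t 2) + nd (t 1)‖ = 2 * |Real.cos B| := by rw [nd_add]
  have p20 : ‖nd (t 2) + nd (t 0)‖ = 2 * |Real.cos C| := by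
    rw [nd_add, hABe, Real.cos_pi_sub, abs_neg]
  have E0 : (Finset.univ : Finset (Fin 3)).erase 0 = {2, 1} := by decide
  have E1 : (Finset.univ : Finset (Fin 3)).erase 1 = {2, 0} := by decide
  have E2 : (Finset.univ : Finset (Fin 3)).erase 2 = {1, 0} := by decide
  have n01 := n10; rw [norm_sub_rev] at n01
  have n12 := n21; rw [norm_sub_rev] at n12
  have n02 := n20; rw [norm_sub_rev] at n02
  rw [Fin.sum_univ_three, vander_inv _ hinj, vander_inv _ hinj, vander_inv _ hinj, E0, E1, E2]
  rw [Finset.prod_pair (by decide), Finset.prod_pair (by decide), Finset.prod_pair (by decide),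
    Finset.prod_pair (by decide), Finset.prod_pair (by decide), Finset.prod_pair (by decide),
    n01, n12, n02, n10, n21, n20, quad_coeff, quad_coeff, quad_coeff]
  have triv : 1 / (2 * Real.sin C * (2 * Real.sin A)) + 1 / (2 * Real.sin B * (2 * Real.sin A)) +
      1 / (2 * Real.sin B * (2 * Real.sin C)) ≤ (Real.sin x ^ 2)⁻¹ := by
    have aux : ∀ p q : ℝ, Real.sin x ≤ p → Real.sin x ≤ q →
        1 / (2 * p * (2 * q)) ≤ (Real.sin x ^ 2)⁻¹ / 4 := by
      intro p q hp hq
      rw [inv_eq_one_div, div_div]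
      apply one_div_le_one_div_of_le (by positivity)
      nlinarith
    have : 0 < (Real.sin x ^ 2)⁻¹ := by positivity
    linarith [aux _ _ hsC hsA, aux _ _ hsB hsA, aux _ _ hsB hsC]
  fin_cases k
  · simpa [nd_norm] using triv
  · have T := tri (A := A) (B := B) (C := C) (x := x) (by rw [hC]; ring) hx0 hxA hxB hxC
    have hn : ∀ z : ℂ, ∀ y : ℂ, ‖-y + -z‖ = ‖z + y‖ := by
      intro z y; rw [← norm_neg]; congr 1; ring
    simp only [Polynomial.coeff_add, Polynomial.coeff_C_mul, Polynomial.coeff_X_pow,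
      Polynomial.coeff_X, Polynomial.coeff_C]
    norm_num
    simp only [hn, p10, p21, p20]
    rw [inv_eq_one_div, le_div_iff₀ (by positivity)]
    have e : (2 * |Real.cos B| / (2 * Real.sin C * (2 * Real.sin A)) +
        2 * |Real.cos C| / (2 * Real.sin B * (2 * Real.sin A)) +
        2 * |Real.cos A| / (2 * Real.sin B * (2 * Real.sin C))) * Real.sin x ^ 2 =
        ((|Real.cos A| * Real.sin A + |Real.cos B| * Real.sin B + |Real.cos C| * Real.sin C)
      * Real.sin x ^ 2) / (2 * (Real.sin A * Real.sin B * Real.sin C)) := by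
      field_simp
      ring
    rw [e, div_le_one (by positivity)]
    exact T
  · simpa [Polynomial.coeff_X, Polynomial.coeff_C] using triv

/-- **Bound on the inverse of the Vandermonde matrix.**  With `m/ε = L_m/Δx + α_m`
(`L_m ∈ ℤ`, `α_m ∈ [0,1/Δx)`), `w_m = e^{2πi L_m δx/Δx}`, and `V_{m,k} = w_m^k`
(`m = -M,…,M`, `k = 0,…,2M`), the matrix `V` is invertible and
`‖V⁻¹‖_∞ ≤ (sin(π(1/ε-1/Δx)δx))^{-2M}`, where `‖·‖_∞` is the maximum absolute
row sum. -/
theorem vandermonde_inverse_bound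
    (ε Δx δx : ℝ) (M : ℕ)
    (hM : 1 ≤ M) (hε : 0 < ε) (hΔx : ε < Δx)
    (hδx : 0 < δx) (hδx2 : δx ≤ ε / (2 * M + 1))
    (L : ℤ → ℤ) (α : ℤ → ℝ)
    (hdecomp : ∀ m : ℤ, |m| ≤ (M : ℤ) →
      (m : ℝ) / ε = (L m : ℝ) / Δx + α m ∧ 0 ≤ α m ∧ α m < 1 / Δx) :
    IsUnit (vanderMat fun m : Fin (2 * M + 1) =>
      Complex.exp (2 * Real.pi * Complex.I * ((L ((m : ℤ) - (M : ℤ)) : ℝ) * δx / Δx))) ∧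
    ∀ i : Fin (2 * M + 1),
      ∑ k : Fin (2 * M + 1),
        ‖(vanderMat fun m : Fin (2 * M + 1) =>
            Complex.exp (2 * Real.pi * Complex.I *
              ((L ((m : ℤ) - (M : ℤ)) : ℝ) * δx / Δx)))⁻¹ i k‖ ≤
      Real.sin (Real.pi * (1 / ε - 1 / Δx) * δx) ^ (-(2 * (M : ℤ))) := by


  have hΔ : 0 < Δx := hε.trans hΔx
  set t : Fin (2 * M + 1) → ℝ := fun m => (L ((m : ℤ) - (M : ℤ)) : ℝ) * δx / Δx with ht
  have hV : (fun m : Fin (2 * M + 1) => Complex.exp (2 * Real.pi * Complex.I *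
      ((L ((m : ℤ) - (M : ℤ)) : ℝ) * δx / Δx))) = fun m => nd (t m) := by
    funext m
    simp only [nd, ht]
    push_cast
    rfl
  rw [hV]
  set a := δx / ε with ha
  set b := δx / Δx with hb
  have hb0 : 0 < b := by positivity
  have hab : b < a := div_lt_div_of_pos_left hδx hε hΔx
  have hNa : (2 * M + 1) * a ≤ 1 := by
    have hc : (0 : ℝ) < 2 * M + 1 := by positivity
    rw [le_div_iff₀ hc] at hδx2
    rw [ha, mul_div_assoc', div_le_one hε]
    linarith
  have hM1 : (1 : ℝ) ≤ M := by exact_mod_cast hM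
  set g := a - b with hg
  have hg0 : 0 < g := by linarith
  have harg : Real.pi * (1 / ε - 1 / Δx) * δx = Real.pi * g := by
    rw [hg, ha, hb]; ring
  rw [harg]
  -- separation
  have sep : ∀ i j : Fin (2 * M + 1), (((i : ℕ) : ℝ) - ((j : ℕ) : ℝ)) * a - b < t i - t j ∧
      t i - t j < (((i : ℕ) : ℝ) - ((j : ℕ) : ℝ)) * a + b := by
    have pos : ∀ i : Fin (2 * M + 1), ((((i : ℕ) : ℝ) - M) * a - b < t i) ∧
        t i ≤ (((i : ℕ) : ℝ) - M) * a := by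
      intro i
      have hi := i.isLt
      obtain ⟨h1, h2, h3⟩ := hdecomp ((i : ℤ) - M) (by rw [abs_le]; constructor <;> omega)
      push_cast at h1
      have e1 : (((i : ℕ) : ℝ) - M) * a = t i + α ((i : ℤ) - M) * δx := by
        have : (((i : ℕ) : ℝ) - M) * a = (((i : ℕ) : ℝ) - M) / ε * δx := by rw [ha]; ring
        rw [this, h1, ht]; ring
      have e2 : α ((i : ℤ) - M) * δx < b := by
        have := mul_lt_mul_of_pos_right h3 hδx
        rwa [one_div_mul_eq_div] at this
      have e3 : 0 ≤ α ((i : ℤ) - M) * δx := by positivity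
      constructor <;> linarith
    intro i j
    obtain ⟨h1, h2⟩ := pos i
    obtain ⟨h3, h4⟩ := pos j
    constructor <;> linarith
  -- separation with a multiple
  have sep' : ∀ c : ℕ, 1 ≤ c → ∀ i j : Fin (2 * M + 1), (j : ℕ) + c ≤ i → (i : ℕ) + c ≤ j + (2 * M + 1) →
      c * g ≤ t i - t j ∧ t i - t j ≤ 1 - c * g := by
    intro c hc i j h1 h2
    obtain ⟨h3, h4⟩ := sep i j
    have h1' : (c : ℝ) ≤ ((i : ℕ) : ℝ) - ((j : ℕ) : ℝ) := by
      have : (((j : ℕ) + c : ℕ) : ℝ) ≤ ((i : ℕ) : ℝ) := by exact_mod_cast h1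
      push_cast at this; linarith
    have h2' : ((i : ℕ) : ℝ) - ((j : ℕ) : ℝ) ≤ (2 * M + 1) - c := by
      have : (((i : ℕ) + c : ℕ) : ℝ) ≤ (((j : ℕ) + (2 * M + 1) : ℕ) : ℝ) := by exact_mod_cast h2
      push_cast at this; linarith
    have hc' : (1 : ℝ) ≤ c := by exact_mod_cast hc
    have ha0 : 0 < a := by linarith
    have := mul_le_mul_of_nonneg_right h1' ha0.le
    have := mul_le_mul_of_nonneg_right h2' ha0.le
    have := mul_le_mul_of_nonneg_right hc' hb0.le
    constructor <;> rw [hg] <;> nlinarith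
  have sepn : ∀ c : ℕ, 1 ≤ c → ∀ i j : Fin (2 * M + 1),
      ((j : ℕ) + c ≤ i ∧ (i : ℕ) + c ≤ j + (2 * M + 1)) ∨
      ((i : ℕ) + c ≤ j ∧ (j : ℕ) + c ≤ i + (2 * M + 1)) →
      2 * Real.sin (Real.pi * (c * g)) ≤ ‖nd (t i) - nd (t j)‖ := by
    intro c hc i j h
    have hcg : 0 < c * g := by positivity
    rcases h with ⟨h1, h2⟩ | ⟨h1, h2⟩
    · obtain ⟨h3, h4⟩ := sep' c hc i j h1 h2
      have e : |t i - t j| = t i - t j := abs_of_nonneg (by linarith)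
      exact nd_sub_lower hcg.le (by rw [e]; exact h3) (by rw [e]; exact h4)
    · obtain ⟨h3, h4⟩ := sep' c hc j i h1 h2
      rw [norm_sub_rev]
      have e : |t j - t i| = t j - t i := abs_of_nonneg (by linarith)
      exact nd_sub_lower hcg.le (by rw [e]; exact h3) (by rw [e]; exact h4)
  have hp := Real.pi_pos
  have hgN : (2 * M + 1) * g < 1 := by
    have : (2 * M + 1) * g < (2 * M + 1) * a := by
      apply mul_lt_mul_of_pos_left _ (by positivity); linarith
    linarith
  have hg3 : 3 * g < 1 := by nlinarith
  have hs : 0 < Real.sin (Real.pi * g) :=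
    Real.sin_pos_of_pos_of_lt_pi (by positivity) (by nlinarith)
  have H1 : ∀ i j : Fin (2 * M + 1), i ≠ j →
      2 * Real.sin (Real.pi * g) ≤ ‖nd (t i) - nd (t j)‖ := by
    intro i j hij
    have hi := i.isLt
    have hj := j.isLt
    have hij' : (i : ℕ) ≠ j := fun h => hij (Fin.ext h)
    have := sepn 1 le_rfl i j (by omega)
    simpa using this
  have hinj : Function.Injective fun i => nd (t i) := by
    intro i j hij
    by_contra hne
    have := H1 i j hne
    have h0 : nd (t i) - nd (t j) = 0 := sub_eq_zero.2 hij
    rw [h0, norm_zero] at this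
    linarith
  refine ⟨vander_isUnit _ hinj, fun k => ?_⟩
  have hz : Real.sin (Real.pi * g) ^ (-(2 * (M : ℤ))) = (Real.sin (Real.pi * g) ^ (2 * M))⁻¹ := by
    rw [zpow_neg]; norm_cast
  rw [hz]
  rcases Nat.lt_or_ge M 2 with h | h
  · obtain rfl : M = 1 := by omega
    have a1 := sep' 1 le_rfl 1 0 (by decide) (by decide)
    have a2 := sep' 1 le_rfl 2 1 (by decide) (by decide)
    have a3 := sep' 1 le_rfl 2 0 (by decide) (by decide)
    simp only [Nat.cast_one, one_mul] at a1 a2 a3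
    exact small_case t hinj g hg0 a1.1 a2.1 a3.2 k
  · refine big_case M h (fun i => nd (t i)) hinj (fun j => nd_norm _) _ hs H1 ?_ k
    intro i j hij hj1 hj2
    have hi := i.isLt
    have hj := j.isLt
    have hij' : (i : ℕ) ≠ j := fun h => hij (Fin.ext h)
    have hA : (j : ℕ) ≠ ((i : ℕ) + 1) % (2 * M + 1) := by
      intro e
      apply hj1
      apply Fin.ext
      rw [e, Fin.val_add, Fin.val_one']
      simp
    have hB : (i : ℕ) ≠ ((j : ℕ) + 1) % (2 * M + 1) := by
      intro e
      apply hj2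
      rw [eq_sub_iff_add_eq]
      apply Fin.ext
      rw [e, Fin.val_add, Fin.val_one']
      simp
    have hA1 : (j : ℕ) ≠ i + 1 := by
      intro e; apply hA; rw [Nat.mod_eq_of_lt (by omega)]; exact e
    have hB1 : (i : ℕ) ≠ j + 1 := by
      intro e; apply hB; rw [Nat.mod_eq_of_lt (by omega)]; exact e
    have hA2 : ¬ ((i : ℕ) = 2 * M ∧ (j : ℕ) = 0) := by
      rintro ⟨e1, e2⟩; apply hA; rw [e1, e2, Nat.mod_self]
    have hB2 : ¬ ((j : ℕ) = 2 * M ∧ (i : ℕ) = 0) := by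
      rintro ⟨e1, e2⟩; apply hB; rw [e1, e2, Nat.mod_self]
    have key := sepn 2 (by norm_num) i j (by omega)
    refine le_trans ?_ key
    have e : Real.pi * (((2 : ℕ) : ℝ) * g) = 2 * (Real.pi * g) := by push_cast; ring
    rw [e, Real.sin_two_mul]
    have hM2 : (2 : ℝ) ≤ M := by exact_mod_cast h
    have hg5 : g < 1 / 4 := by nlinarith
    have hcos : √2 / 2 ≤ Real.cos (Real.pi * g) := by
      rw [← Real.cos_pi_div_four]
      apply Real.cos_le_cos_of_nonneg_of_le_pi (by positivity) (by linarith) (by nlinarith)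
    nlinarith
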